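/- Dichotomy when adding a simplex: Let G be a finite abstract simplicial complex, x ∈ G a facet (an element not strictly contained in any other element of G) with |x| = k+1, and K = G \ {x}, which is a subcomplex. Then exactly one of the following holds: (i) b_k(G) = b_k(K) + 1 and b_p(G) = b_p(K) for all p ≠ k, or (ii) k ≥ 1, b_{k−1}(G) = b_{k−1}(K) − 1 and b_p(G) = b_p(K) for all p ≠ k−1. -/

import Mathlib

/-!
Hodge theory over `ℝ` turns Betti numbers into ranks: on `p`-forms the Laplacian is
`Bᵀ * B + C * Cᵀ` with `B * C = 0`, so its kernel has dimension
`#(p-simplices) - rank B - rank C`. Deleting a facet with `k + 1` vertices lowers the number of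
`k`-simplices by one. On the coboundary matrices it deletes zero columns, because nothing lies
above a facet, and one row of the coboundary into `k`-forms. Either that row depends linearly on
the others, and only `b_k` changes, or the rank drops by one, which cancels the change in `b_k`
and moves it to `b_(k-1)`.
-/

open Matrix

/-- A finite abstract simplicial complex: a finite nonempty collection of nonempty
finite subsets of ℕ closed under taking nonempty subsets. -/
def IsComplex (G : Finset (Finset ℕ)) : Prop :=
  G.Nonempty ∧ ∅ ∉ G ∧ ∀ x ∈ G, ∀ y : Finset ℕ, y ⊆ x → y.Nonempty → y ∈ G

/-- A subcomplex: a set of sets closed under taking nonempty subsets. -/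
def IsSubcomplex (K : Finset (Finset ℕ)) : Prop :=
  ∀ x ∈ K, ∀ y : Finset ℕ, y ⊆ x → y.Nonempty → y ∈ K

/-- The incidence sign s(x,y) = (-1)^i when y is obtained from x by deleting the
(i+1)-th smallest element of x. -/
noncomputable def incSign (x y : Finset ℕ) : ℝ :=
  (-1 : ℝ) ^ (x.filter (fun v => ∃ w ∈ x \ y, v < w)).card

/-- The exterior derivative matrix of a subset A of a simplicial complex. -/
noncomputable def extDer (A : Finset (Finset ℕ)) : Matrix A A ℝ :=
  Matrix.of fun x y =>
    if (y : Finset ℕ) ⊆ (x : Finset ℕ) ∧ (x : Finset ℕ).card = (y : Finset ℕ).card + 1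
    then incSign (x : Finset ℕ) (y : Finset ℕ) else 0

/-- The Dirac matrix D = d + dᵀ. -/
noncomputable def dirac (A : Finset (Finset ℕ)) : Matrix A A ℝ :=
  extDer A + (extDer A)ᵀ

/-- The Hodge Laplacian L = D². -/
noncomputable def hodge (A : Finset (Finset ℕ)) : Matrix A A ℝ :=
  dirac A * dirac A

/-- The block of the Hodge Laplacian acting on p-forms: the submatrix of L on
the p-simplices (sets of cardinality p+1). -/
noncomputable def hodgeBlock (A : Finset (Finset ℕ)) (p : ℕ) :
    Matrix (A.filter fun x => x.card = p + 1) (A.filter fun x => x.card = p + 1) ℝ :=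
  (hodge A).submatrix
    (fun x => ⟨x.1, (Finset.mem_filter.mp x.2).1⟩)
    (fun x => ⟨x.1, (Finset.mem_filter.mp x.2).1⟩)

/-- The p-th Betti number: the dimension of the kernel of the p-form block of the
Hodge Laplacian. -/
noncomputable def betti (A : Finset (Finset ℕ)) (p : ℕ) : ℕ :=
  Module.finrank ℝ (LinearMap.ker (Matrix.toLin' (hodgeBlock A p)))

open Finset

section MatrixRank

variable {l m n α β R : Type*}

lemma range_mulVecLin_fromCols [CommSemiring R] [Fintype m] [Fintype n] (A : Matrix l m R)
    (B : Matrix l n R) :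
    LinearMap.range (fromCols A B).mulVecLin =
      LinearMap.range A.mulVecLin ⊔ LinearMap.range B.mulVecLin := by
  have hcol : (fromCols A B).col = Sum.elim A.col B.col := by
    ext (j | j) <;> rfl
  rw [range_mulVecLin, range_mulVecLin, range_mulVecLin, hcol, Set.Sum.elim_range,
    Submodule.span_union]

lemma disjoint_range_transpose_of_mul_eq_zero [Field R] [LinearOrder R] [IsStrictOrderedRing R]
    [Fintype l] [Fintype m] [Fintype n] {B : Matrix l m R} {C : Matrix m n R} (h : B * C = 0) :
    Disjoint (LinearMap.range Bᵀ.mulVecLin) (LinearMap.range C.mulVecLin) := by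
  rw [Submodule.disjoint_def]
  rintro _ ⟨u, rfl⟩ ⟨v, hv : C *ᵥ v = Bᵀ *ᵥ u⟩
  refine dotProduct_self_eq_zero.1 ?_
  calc (Bᵀ *ᵥ u) ⬝ᵥ (Bᵀ *ᵥ u) = (u ᵥ* B) ⬝ᵥ (C *ᵥ v) := by rw [hv, mulVec_transpose]
    _ = u ⬝ᵥ ((B * C) *ᵥ v) := by rw [← dotProduct_mulVec, mulVec_mulVec]
    _ = 0 := by rw [h, zero_mulVec, dotProduct_zero]

lemma rank_transpose_mul_self_add_self_mul_transpose [Field R] [LinearOrder R]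
    [IsStrictOrderedRing R] [Fintype l] [Fintype m] [Fintype n] {B : Matrix l m R}
    {C : Matrix m n R} (h : B * C = 0) :
    (Bᵀ * B + C * Cᵀ).rank = B.rank + C.rank := by
  have hgram : Bᵀ * B + C * Cᵀ = fromCols Bᵀ C * (fromCols Bᵀ C)ᵀ := by
    rw [transpose_fromCols, fromCols_mul_fromRows, transpose_transpose]
  have hdim := Submodule.finrank_sup_add_finrank_inf_eq
    (LinearMap.range Bᵀ.mulVecLin) (LinearMap.range C.mulVecLin)
  rw [(disjoint_range_transpose_of_mul_eq_zero h).eq_bot, finrank_bot, add_zero] at hdim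
  rw [hgram, rank_self_mul_transpose, ← rank_transpose B, rank, range_mulVecLin_fromCols, hdim,
    rank, rank]

lemma rank_submatrix_coe_eq_finrank_span [CommSemiring R] (M : Matrix α β R) (s : Finset α)
    (t : Finset β) :
    (M.submatrix ((↑) : s → α) ((↑) : t → β)).rank =
      Module.finrank R (Submodule.span R ((fun b => s.restrict (M.col b)) '' t)) := by
  rw [rank_eq_finrank_span_cols, ← Subtype.range_coe (s := (t : Set β)), ← Set.range_comp]
  rfl

lemma span_image_eq_span_image_erase_sup [Semiring R] [AddCommMonoid α] [Module R α]
    [DecidableEq β] (f : β → α) {t : Finset β} {b : β} (hb : b ∈ t) :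
    Submodule.span R (f '' t) =
      Submodule.span R (f '' (t.erase b : Finset β)) ⊔ Submodule.span R {f b} := by
  rw [sup_comm, ← Submodule.span_insert, ← Set.image_insert_eq, ← coe_insert, insert_erase hb]

lemma rank_submatrix_erase_col_of_eq_zero [CommSemiring R] [DecidableEq β] (M : Matrix α β R)
    (s : Finset α) (t : Finset β) {b : β} (hb : ∀ a ∈ s, M a b = 0) :
    (M.submatrix ((↑) : s → α) ((↑) : t.erase b → β)).rank =
      (M.submatrix ((↑) : s → α) ((↑) : t → β)).rank := by
  by_cases hbt : b ∈ t
  · have hcol : s.restrict (M.col b) = 0 := funext fun a => hb a a.2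
    rw [rank_submatrix_coe_eq_finrank_span, rank_submatrix_coe_eq_finrank_span,
      span_image_eq_span_image_erase_sup _ hbt, hcol, Submodule.span_zero_singleton, sup_bot_eq]
  · rw [erase_eq_of_notMem hbt]

lemma rank_submatrix_eq_or_eq_erase_col_add_one [Field R] [DecidableEq β] (M : Matrix α β R)
    (s : Finset α) (t : Finset β) (b : β) :
    (M.submatrix ((↑) : s → α) ((↑) : t → β)).rank =
        (M.submatrix ((↑) : s → α) ((↑) : t.erase b → β)).rank ∨
      (M.submatrix ((↑) : s → α) ((↑) : t → β)).rank =
        (M.submatrix ((↑) : s → α) ((↑) : t.erase b → β)).rank + 1 := by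
  by_cases hbt : b ∈ t
  · rw [rank_submatrix_coe_eq_finrank_span, rank_submatrix_coe_eq_finrank_span,
      span_image_eq_span_image_erase_sup _ hbt]
    by_cases hmem : s.restrict (M.col b) ∈
        Submodule.span R ((fun b => s.restrict (M.col b)) '' (t.erase b : Finset β))
    · exact .inl (by rw [sup_eq_left.2 ((Submodule.span_singleton_le_iff_mem _ _).2 hmem)])
    · exact .inr (Submodule.finrank_sup_span_singleton hmem)
  · exact .inl (by rw [erase_eq_of_notMem hbt])

lemma rank_submatrix_eq_or_eq_erase_row_add_one [Field R] [DecidableEq α] (M : Matrix α β R)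
    (s : Finset α) (t : Finset β) (a : α) :
    (M.submatrix ((↑) : s → α) ((↑) : t → β)).rank =
        (M.submatrix ((↑) : s.erase a → α) ((↑) : t → β)).rank ∨
      (M.submatrix ((↑) : s → α) ((↑) : t → β)).rank =
        (M.submatrix ((↑) : s.erase a → α) ((↑) : t → β)).rank + 1 := by
  simpa only [← transpose_submatrix, rank_transpose] using
    rank_submatrix_eq_or_eq_erase_col_add_one Mᵀ t s a

end MatrixRank

section SetFamily

variable {α M : Type*}

lemma sum_slice_eq_sum [AddCommMonoid M] {A : Finset (Finset α)} {n : ℕ} {f : Finset α → M}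
    (hf : ∀ z, #z ≠ n → f z = 0) : ∑ z ∈ A # n, f z = ∑ z ∈ A, f z :=
  sum_subset slice_subset fun z hzA hz => hf z fun hcard => hz (mem_slice.2 ⟨hzA, hcard⟩)

variable [DecidableEq α]

lemma Ioo_insert_insert {w : Finset α} {a b : α} (ha : a ∉ w) (hb : b ∉ w) (hab : a ≠ b) :
    Ioo w (insert a (insert b w)) = {insert a w, insert b w} := by
  ext z
  simp only [Finset.mem_Ioo, mem_insert, mem_singleton, ssubset_iff_subset_ne]
  grind

lemma slice_erase (A : Finset (Finset α)) (x : Finset α) (n : ℕ) :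
    (A.erase x) # n = (A # n).erase x :=
  filter_erase _ x A

lemma slice_erase_of_card_ne {A : Finset (Finset α)} {x : Finset α} {n : ℕ} (hn : #x ≠ n) :
    (A.erase x) # n = A # n := by
  rw [slice_erase, erase_eq_of_notMem fun hx => hn (mem_slice.1 hx).2]

lemma card_slice_erase_add_one {A : Finset (Finset α)} {x : Finset α} {n : ℕ} (hx : x ∈ A)
    (hn : #x = n) :
    #((A.erase x) # n) + 1 = #(A # n) := by
  rw [slice_erase, card_erase_add_one (mem_slice.2 ⟨hx, hn⟩)]

end SetFamily

/-- The incidence matrix of all finite subsets of `ℕ`. The exterior derivatives of all complexes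
are submatrices of it, which makes those of `G` and of a subcomplex of `G` directly comparable. -/
noncomputable def incidence : Matrix (Finset ℕ) (Finset ℕ) ℝ :=
  Matrix.of fun y z => if z ⊆ y ∧ #y = #z + 1 then incSign y z else 0

lemma subset_and_card_of_incidence_ne_zero {y z : Finset ℕ} (h : incidence y z ≠ 0) :
    z ⊆ y ∧ #y = #z + 1 :=
  of_not_not fun hyz => h (if_neg hyz)

lemma incidence_eq_zero_of_card_ne {y z : Finset ℕ} (h : #y ≠ #z + 1) : incidence y z = 0 :=
  if_neg fun hyz => h hyz.2

lemma incidence_add_mul_incidence_add {y w : Finset ℕ} (hyw : #y = #w) (z : Finset ℕ) :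
    (incidence y z + incidence z y) * (incidence z w + incidence w z) =
      incidence z y * incidence z w + incidence y z * incidence w z := by
  by_cases hz : #y = #z + 1
  · rw [incidence_eq_zero_of_card_ne (show #z ≠ #y + 1 by lia),
      incidence_eq_zero_of_card_ne (show #z ≠ #w + 1 by lia)]
    ring
  · rw [incidence_eq_zero_of_card_ne hz, incidence_eq_zero_of_card_ne (show #w ≠ #z + 1 by lia)]
    ring

lemma extDer_eq_submatrix (A : Finset (Finset ℕ)) : extDer A = incidence.submatrix (↑) (↑) :=
  rfl

lemma hodge_apply (A : Finset (Finset ℕ)) (y w : A) :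
    hodge A y w =
      ∑ z ∈ A, (incidence y z + incidence z y) * (incidence z w + incidence w z) := by
  rw [← sum_coe_sort]
  simp only [hodge, dirac, extDer_eq_submatrix, mul_apply, Matrix.add_apply, transpose_apply,
    submatrix_apply]

lemma incidence_insert {z : Finset ℕ} {a : ℕ} (ha : a ∉ z) :
    incidence (insert a z) z = (-1) ^ #{v ∈ z | v < a} := by
  have hfilter : {v ∈ insert a z | ∃ w ∈ insert a z \ z, v < w} = {v ∈ z | v < a} := by
    ext v
    simp only [insert_sdiff_cancel ha, mem_filter, mem_insert, mem_singleton, exists_eq_left]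
    grind
  rw [incidence, of_apply, if_pos ⟨subset_insert a z, card_insert_of_notMem ha⟩, incSign, hfilter]

lemma incidence_mul_incidence_add {w : Finset ℕ} {a b : ℕ} (ha : a ∉ w) (hb : b ∉ w)
    (hab : a ≠ b) :
    incidence (insert a (insert b w)) (insert a w) * incidence (insert a w) w +
      incidence (insert a (insert b w)) (insert b w) * incidence (insert b w) w = 0 := by
  wlog hlt : a < b generalizing a b
  · rw [add_comm, insert_comm]
    exact this hb ha hab.symm (by lia)
  have hbelow_a : {v ∈ insert b w | v < a} = {v ∈ w | v < a} := by
    rw [filter_insert, if_neg hlt.not_gt]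
  have hbelow_b : #{v ∈ insert a w | v < b} = #{v ∈ w | v < b} + 1 := by
    rw [filter_insert, if_pos hlt, card_insert_of_notMem (by simp [ha])]
  have hface_a : incidence (insert a (insert b w)) (insert b w) = (-1) ^ #{v ∈ w | v < a} := by
    rw [incidence_insert (by simp [hab, ha]), hbelow_a]
  have hface_b : incidence (insert a (insert b w)) (insert a w) =
      (-1) ^ (#{v ∈ w | v < b} + 1) := by
    rw [insert_comm, incidence_insert (by simp [hab.symm, hb]), hbelow_b]
  rw [hface_a, hface_b, incidence_insert ha, incidence_insert hb]
  ring

lemma sum_incidence_mul_incidence {y w : Finset ℕ} {T : Finset (Finset ℕ)} (hT : Ioo w y ⊆ T) :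
    ∑ z ∈ T, incidence y z * incidence z w = 0 := by
  by_cases hwy : w ⊆ y ∧ #y = #w + 2
  · obtain ⟨a, b, hab, hsdiff⟩ : ∃ a b, a ≠ b ∧ y \ w = {a, b} := by
      rw [← card_eq_two, card_sdiff_of_subset hwy.1]
      lia
    obtain ⟨ha, hb, rfl⟩ : a ∉ w ∧ b ∉ w ∧ y = insert a (insert b w) := by
      have hmem : ∀ v, v ∈ y ∧ v ∉ w ↔ v = a ∨ v = b := by
        simpa using Finset.ext_iff.1 hsdiff
      grind
    have hsupport : ∀ z ∈ T, z ∉ Ioo w (insert a (insert b w)) →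
        incidence (insert a (insert b w)) z * incidence z w = 0 := by
      intro z _ hz
      by_contra hne
      obtain ⟨hzy, _⟩ := subset_and_card_of_incidence_ne_zero (left_ne_zero_of_mul hne)
      obtain ⟨hwz, hzcard⟩ := subset_and_card_of_incidence_ne_zero (right_ne_zero_of_mul hne)
      refine hz (Finset.mem_Ioo.2 ⟨hwz.ssubset_of_ne ?_, hzy.ssubset_of_ne ?_⟩) <;> grind
    rw [← sum_subset hT hsupport, Ioo_insert_insert ha hb hab, sum_pair (by grind)]
    exact incidence_mul_incidence_add ha hb hab
  · refine sum_eq_zero fun z _ => ?_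
    by_contra hne
    obtain ⟨hzy, hycard⟩ := subset_and_card_of_incidence_ne_zero (left_ne_zero_of_mul hne)
    obtain ⟨hwz, hzcard⟩ := subset_and_card_of_incidence_ne_zero (right_ne_zero_of_mul hne)
    exact hwy ⟨hwz.trans hzy, by lia⟩

/-- The block of the exterior derivative of `A` taking `(n - 1)`-forms to `n`-forms. It is indexed
by the cardinality `n` of the sets in its domain, so that no `-1` occurs; for a complex the block
`n = 0` has no columns. -/
noncomputable def coboundary (A : Finset (Finset ℕ)) (n : ℕ) :
    Matrix ↥(A # (n + 1)) ↥(A # n) ℝ :=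
  incidence.submatrix (↑) (↑)

lemma coboundary_mul_coboundary {A : Finset (Finset ℕ)} (hA : IsSubcomplex A) (n : ℕ) :
    coboundary A (n + 1) * coboundary A n = 0 := by
  ext ⟨y, hy⟩ ⟨w, hw⟩
  obtain ⟨hyA, hycard⟩ := mem_slice.1 hy
  obtain ⟨-, hwcard⟩ := mem_slice.1 hw
  have hbetween : Ioo w y ⊆ A # (n + 1) := by
    intro z hz
    obtain ⟨hwz, hzy⟩ := Finset.mem_Ioo.1 hz
    have hlow := card_lt_card hwz
    have hhigh := card_lt_card hzy
    exact mem_slice.2 ⟨hA y hyA z hzy.subset (card_pos.1 (by lia)), by lia⟩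
  exact (sum_coe_sort (A # (n + 1)) fun z => incidence y z * incidence z w).trans
    (sum_incidence_mul_incidence hbetween)

lemma hodgeBlock_eq (A : Finset (Finset ℕ)) (p : ℕ) :
    hodgeBlock A p =
      (coboundary A (p + 1))ᵀ * coboundary A (p + 1) + coboundary A p * (coboundary A p)ᵀ := by
  ext ⟨y, hy⟩ ⟨w, hw⟩
  have hycard : #y = p + 1 := (mem_filter.1 hy).2
  have hwcard : #w = p + 1 := (mem_filter.1 hw).2
  have hup : ∑ z ∈ A # (p + 1 + 1), incidence z y * incidence z w =
      ∑ z ∈ A, incidence z y * incidence z w :=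
    sum_slice_eq_sum fun z hz => by rw [incidence_eq_zero_of_card_ne (by lia), zero_mul]
  have hdown : ∑ z ∈ A # p, incidence y z * incidence w z =
      ∑ z ∈ A, incidence y z * incidence w z :=
    sum_slice_eq_sum fun z hz => by rw [incidence_eq_zero_of_card_ne (by lia), zero_mul]
  calc hodgeBlock A p ⟨y, hy⟩ ⟨w, hw⟩
      = ∑ z ∈ A, (incidence y z + incidence z y) * (incidence z w + incidence w z) :=
        hodge_apply A _ _
    _ = ∑ z ∈ A # (p + 1 + 1), incidence z y * incidence z w +
          ∑ z ∈ A # p, incidence y z * incidence w z := by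
        rw [sum_congr rfl fun z _ => incidence_add_mul_incidence_add (hycard.trans hwcard.symm) z,
          sum_add_distrib, hup, hdown]
    _ = _ := by
        rw [← sum_coe_sort, ← sum_coe_sort (A # p)]
        rfl

lemma betti_add_rank_add_rank {A : Finset (Finset ℕ)} (hA : IsSubcomplex A) (p : ℕ) :
    betti A p + (coboundary A (p + 1)).rank + (coboundary A p).rank = #(A # (p + 1)) := by
  have hnullity := (toLin' (hodgeBlock A p)).finrank_range_add_finrank_ker
  have hrank : Module.finrank ℝ (LinearMap.range (toLin' (hodgeBlock A p))) =
      (coboundary A (p + 1)).rank + (coboundary A p).rank := by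
    rw [hodgeBlock_eq]
    exact rank_transpose_mul_self_add_self_mul_transpose (coboundary_mul_coboundary hA p)
  have hdim : Module.finrank ℝ (A.filter (fun x => #x = p + 1) → ℝ) = #(A # (p + 1)) := by
    rw [Module.finrank_fintype_fun_eq_card, Fintype.card_coe]
    rfl
  rw [hrank, hdim] at hnullity
  rw [betti]
  lia

section Facet

variable {G : Finset (Finset ℕ)} {x : Finset ℕ}

lemma IsSubcomplex.erase (hG : IsSubcomplex G) (hx : Maximal (· ∈ G) x) :
    IsSubcomplex (G.erase x) := by
  intro y hy z hzy hz
  obtain ⟨hyx, hyG⟩ := mem_erase.1 hy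
  refine mem_erase.2 ⟨?_, hG y hyG z hzy hz⟩
  rintro rfl
  exact hyx (hx.eq_of_le hyG hzy).symm

lemma incidence_eq_zero_of_maximal (hx : Maximal (· ∈ G) x) {y : Finset ℕ} (hy : y ∈ G) :
    incidence y x = 0 := by
  by_contra hne
  obtain ⟨hxy, hcard⟩ := subset_and_card_of_incidence_ne_zero hne
  have := hx.eq_of_le hy hxy
  grind

lemma rank_coboundary_erase (hx : Maximal (· ∈ G) x) (n : ℕ) :
    (coboundary (G.erase x) n).rank =
      (incidence.submatrix ((↑) : ↥((G # (n + 1)).erase x) → Finset ℕ)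
        ((↑) : ↥(G # n) → Finset ℕ)).rank := by
  rw [coboundary, slice_erase, slice_erase]
  exact rank_submatrix_erase_col_of_eq_zero incidence _ _ fun y hy =>
    incidence_eq_zero_of_maximal hx (slice_subset (mem_of_mem_erase hy))

lemma rank_coboundary_erase_of_card_ne (hx : Maximal (· ∈ G) x) {n : ℕ} (hn : #x ≠ n + 1) :
    (coboundary (G.erase x) n).rank = (coboundary G n).rank := by
  rw [rank_coboundary_erase hx, ← slice_erase, slice_erase_of_card_ne hn, coboundary]

lemma rank_coboundary_eq_or_eq_erase_add_one (hx : Maximal (· ∈ G) x) (n : ℕ) :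
    (coboundary G n).rank = (coboundary (G.erase x) n).rank ∨
      (coboundary G n).rank = (coboundary (G.erase x) n).rank + 1 := by
  rw [rank_coboundary_erase hx]
  exact rank_submatrix_eq_or_eq_erase_row_add_one incidence _ _ x

lemma rank_coboundary_zero {A : Finset (Finset ℕ)} (hA : ∅ ∉ A) : (coboundary A 0).rank = 0 := by
  have hempty : #(A # 0) = 0 := by
    rw [card_eq_zero, eq_empty_iff_forall_notMem]
    intro z hz
    obtain ⟨hzA, hz0⟩ := mem_slice.1 hz
    exact hA (card_eq_zero.1 hz0 ▸ hzA)
  have hwidth := rank_le_card_width (coboundary A 0)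
  rwa [Fintype.card_coe, hempty, Nat.le_zero] at hwidth

lemma betti_add_rank_eq_erase_add_one (hG : IsSubcomplex G) (hx : Maximal (· ∈ G) x) {k : ℕ}
    (hcard : #x = k + 1) :
    betti G k + (coboundary G k).rank =
      betti (G.erase x) k + (coboundary (G.erase x) k).rank + 1 := by
  have hbettiG := betti_add_rank_add_rank hG k
  have hbettiK := betti_add_rank_add_rank (hG.erase hx) k
  have hsimplices := card_slice_erase_add_one hx.prop hcard
  have hrank := rank_coboundary_erase_of_card_ne hx (n := k + 1) (by lia)
  lia

lemma betti_add_rank_eq_erase_of_card_ne (hG : IsSubcomplex G) (hx : Maximal (· ∈ G) x) {p : ℕ}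
    (hp : #x ≠ p + 1) :
    betti G p + (coboundary G (p + 1)).rank =
      betti (G.erase x) p + (coboundary (G.erase x) (p + 1)).rank := by
  have hbettiG := betti_add_rank_add_rank hG p
  have hbettiK := betti_add_rank_add_rank (hG.erase hx) p
  have hsimplices := congrArg card (slice_erase_of_card_ne (A := G) hp)
  have hrank := rank_coboundary_erase_of_card_ne hx hp
  lia

end Facet

/-- **Dichotomy when removing a facet.** If x ∈ G is a facet with |x| = k+1 and
K = G \ {x}, then K is a subcomplex and exactly one of the following holds:
(i) b_k(G) = b_k(K) + 1 and b_p(G) = b_p(K) for all p ≠ k, or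
(ii) k ≥ 1, b_{k-1}(G) = b_{k-1}(K) - 1 and b_p(G) = b_p(K) for all p ≠ k-1. -/
theorem betti_facet_dichotomy (G : Finset (Finset ℕ)) (hG : IsComplex G)
    (x : Finset ℕ) (hx : x ∈ G) (k : ℕ) (hcard : x.card = k + 1)
    (hfacet : ∀ y ∈ G, x ⊆ y → y = x) :
    IsSubcomplex (G.erase x) ∧
      Xor' (betti G k = betti (G.erase x) k + 1 ∧
              ∀ p, p ≠ k → betti G p = betti (G.erase x) p)
           (1 ≤ k ∧ betti (G.erase x) (k - 1) = betti G (k - 1) + 1 ∧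
              ∀ p, p ≠ k - 1 → betti G p = betti (G.erase x) p) := by
  have hmax : Maximal (· ∈ G) x := ⟨hx, fun y hy hxy => (hfacet y hy hxy).le⟩
  have hsub : IsSubcomplex G := hG.2.2
  refine ⟨hsub.erase hmax, ?_⟩
  have hbetti := betti_add_rank_eq_erase_add_one hsub hmax hcard
  have hbetti_ne (p : ℕ) (hp : p ≠ k) :
      betti G p + (coboundary G (p + 1)).rank =
        betti (G.erase x) p + (coboundary (G.erase x) (p + 1)).rank :=
    betti_add_rank_eq_erase_of_card_ne hsub hmax (by lia)
  have hrank_ne (n : ℕ) (hn : n ≠ k) : (coboundary (G.erase x) n).rank = (coboundary G n).rank :=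
    rank_coboundary_erase_of_card_ne hmax (by lia)
  rcases rank_coboundary_eq_or_eq_erase_add_one hmax k with hrank | hrank
  · refine .inl ⟨⟨by lia, fun p hp => by grind⟩, fun h => ?_⟩
    have := h.2.2 k (by lia)
    lia
  · have hk : k ≠ 0 := by
      rintro rfl
      have := rank_coboundary_zero hG.2.1
      lia
    obtain ⟨j, rfl⟩ := Nat.exists_eq_succ_of_ne_zero hk
    exact .inr ⟨⟨by lia, by grind, fun p hp => by grind⟩, fun h => by lia⟩
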